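/- If R is a relative m-ovoid of Q⁻(2n+1,q) with respect to 𝒬 and P = ⟨v⟩ is a singular point contained in H (i.e. P ∈ 𝒬), then the number of points of R contained in the hyperplane v^⊥ = {w ∈ V : B(v,w) = 0} equals m(qⁿ − q). -/

import Mathlib

noncomputable section

open Module

variable {F V : Type*} [Field F] [AddCommGroup V] [Module F V]

/-- `P` is a singular point of the quadratic form `Q`, i.e. a `1`-dimensional subspace
spanned by a nonzero singular vector. -/
def IsSingularPoint (Q : QuadraticForm F V) (P : Submodule F V) : Prop :=
  ∃ v : V, v ≠ 0 ∧ Q v = 0 ∧ P = Submodule.span F {v}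

/-- A subspace is totally singular if `Q` vanishes identically on it. -/
def TotallySingular (Q : QuadraticForm F V) (W : Submodule F V) : Prop :=
  ∀ v ∈ W, Q v = 0

/-- A generator is a totally singular subspace of (vector space) dimension `n`. -/
def IsGenerator (Q : QuadraticForm F V) (n : ℕ) (g : Submodule F V) : Prop :=
  TotallySingular Q g ∧ finrank F g = n

/-- The restriction of `Q` to the subspace `U` is nondegenerate. -/
def NondegOn (Q : QuadraticForm F V) (U : Submodule F V) : Prop :=
  ∀ v ∈ U, Q v = 0 → (∀ w ∈ U, QuadraticMap.polar (⇑Q) v w = 0) → v = 0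

/-- The quadratic form `Q` is nondegenerate. -/
def Nondeg (Q : QuadraticForm F V) : Prop :=
  ∀ v : V, Q v = 0 → (∀ w : V, QuadraticMap.polar (⇑Q) v w = 0) → v = 0

/-- `Q` has Witt index `n`: every totally singular subspace has dimension at most `n`
and some totally singular subspace has dimension `n`. -/
def HasWittIndex (Q : QuadraticForm F V) (n : ℕ) : Prop :=
  (∀ W : Submodule F V, TotallySingular Q W → finrank F W ≤ n) ∧
  ∃ W : Submodule F V, TotallySingular Q W ∧ finrank F W = n

/-- A relative `m`-ovoid with respect to the parabolic section cut out by the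
hyperplane `H`: a set `R` of singular points not contained in `H` such that every
generator not contained in `H` contains exactly `m` points of `R`. -/
def IsRelativeMOvoid (Q : QuadraticForm F V) (n : ℕ) (H : Submodule F V) (m : ℕ)
    (R : Set (Submodule F V)) : Prop :=
  (∀ P ∈ R, IsSingularPoint Q P ∧ ¬ P ≤ H) ∧
  ∀ g : Submodule F V, IsGenerator Q n g → ¬ g ≤ H → {P ∈ R | P ≤ g}.ncard = m

/-- The hyperplane `v^⊥ = {w : B(v,w) = 0}`, where `B` is the polar form of `Q`. -/
def vperp (Q : QuadraticForm F V) (v : V) : Submodule F V where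
  carrier := {w | QuadraticMap.polar (⇑Q) v w = 0}
  zero_mem' := QuadraticMap.polar_zero_right Q v
  add_mem' := fun ha hb => by
    simp only [Set.mem_setOf_eq] at *
    rw [QuadraticMap.polar_add_right, ha, hb, add_zero]
  smul_mem' := fun c w hw => by
    simp only [Set.mem_setOf_eq] at *
    rw [QuadraticMap.polar_smul_right, hw, smul_zero]


open QuadraticMap

lemma q_add (Q : QuadraticForm F V) (x y : V) : Q (x + y) = Q x + Q y + polar Q x y :=
  QuadraticMap.map_add Q x y

lemma dcount {α β : Type*} [Finite α] [Finite β] (S : Set α) (T : Set β) (r : α → β → Prop)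
    (a b : ℕ) (h1 : ∀ x ∈ S, {y ∈ T | r x y}.ncard = a)
    (h2 : ∀ y ∈ T, {x ∈ S | r x y}.ncard = b) : S.ncard * a = T.ncard * b := by
  classical
  have := Fintype.ofFinite α
  have := Fintype.ofFinite β
  rw [Set.ncard_eq_toFinset_card', Set.ncard_eq_toFinset_card']
  apply Finset.card_mul_eq_card_mul r
  · intro x hx
    rw [← h1 x (by simpa using hx), Set.ncard_eq_toFinset_card']
    congr 1
    ext y; simp [Finset.bipartiteAbove]
  · intro x hx
    rw [← h2 x (by simpa using hx), Set.ncard_eq_toFinset_card']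
    congr 1
    ext y; simp [Finset.bipartiteBelow]

def orth (Q : QuadraticForm F V) (U : Submodule F V) : Submodule F V :=
  LinearMap.BilinForm.orthogonal (QuadraticMap.polarBilin Q) U

lemma mem_orth (Q : QuadraticForm F V) (U : Submodule F V) (x : V) :
    x ∈ orth Q U ↔ ∀ u ∈ U, polar Q u x = 0 := Iff.rfl

lemma ts_le_orth {Q : QuadraticForm F V} {U : Submodule F V} (hU : TotallySingular Q U) :
    U ≤ orth Q U := by
  intro x hx u hu
  change polar Q u x = 0
  simp [polar, hU _ (add_mem hu hx), hU _ hu, hU _ hx]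

lemma finrank_orth [FiniteDimensional F V] {Q : QuadraticForm F V} (hQ : Nondeg Q)
    {U : Submodule F V} (hU : TotallySingular Q U) :
    finrank F U + finrank F (orth Q U) = finrank F V := by
  have hr : (polarBilin Q).IsRefl := by
    intro x y h
    rw [polarBilin_apply_apply] at h ⊢
    rw [polar_comm, h]
  have := LinearMap.BilinForm.finrank_add_finrank_orthogonal hr (W := U)
  have h0 : U ⊓ LinearMap.BilinForm.orthogonal (polarBilin Q) ⊤ = ⊥ := by
    rw [eq_bot_iff]
    rintro x ⟨hx, hx'⟩
    refine hQ x (hU x hx) fun w => ?_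
    rw [polar_comm]
    exact hx' w trivial
  rw [h0, finrank_bot] at this
  exact this

lemma cw3 [Fintype F] (Q : QuadraticForm F V) (x y z : V) (h : LinearIndependent F ![x, y, z]) :
    ∃ a b c : F, a • x + b • y + c • z ≠ 0 ∧ Q (a • x + b • y + c • z) = 0 := by
  classical
  obtain ⟨p, hp⟩ := CharP.exists F
  have := Fact.mk (CharP.char_is_prime F p)
  let f : MvPolynomial (Fin 3) F :=
    .C (Q x) * (.X 0 * .X 0) + .C (Q y) * (.X 1 * .X 1) + .C (Q z) * (.X 2 * .X 2)
     + .C (polar Q x y) * (.X 0 * .X 1) + .C (polar Q x z) * (.X 0 * .X 2)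
     + .C (polar Q y z) * (.X 1 * .X 2)
  have hm : ∀ (a : F) (i j : Fin 3),
      (MvPolynomial.C a * (MvPolynomial.X i * MvPolynomial.X j)).totalDegree ≤ 2 := by
    intro a i j
    refine (MvPolynomial.totalDegree_mul _ _).trans ?_
    rw [MvPolynomial.totalDegree_C, zero_add]
    refine (MvPolynomial.totalDegree_mul _ _).trans ?_
    simp
  have hf : f.totalDegree ≤ 2 := by
    have ha : ∀ g h : MvPolynomial (Fin 3) F, g.totalDegree ≤ 2 → h.totalDegree ≤ 2 →
        (g + h).totalDegree ≤ 2 := fun g h h1 h2 =>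
      (MvPolynomial.totalDegree_add _ _).trans (max_le h1 h2)
    exact ha _ _ (ha _ _ (ha _ _ (ha _ _ (ha _ _ (hm _ _ _) (hm _ _ _)) (hm _ _ _)) (hm _ _ _))
      (hm _ _ _)) (hm _ _ _)
  have hev : ∀ t : Fin 3 → F, MvPolynomial.eval t f = Q (t 0 • x + t 1 • y + t 2 • z) := by
    intro t
    simp only [f, map_add, map_mul, MvPolynomial.eval_C, MvPolynomial.eval_X]
    simp only [q_add, QuadraticMap.map_smul, polar_add_left, polar_smul_left,
      polar_smul_right, smul_eq_mul]
    ring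
  have hd := char_dvd_card_solutions (K := F) p (f := f) (by simpa using by omega)
  have h0 : MvPolynomial.eval (0 : Fin 3 → F) f = 0 := by rw [hev]; simp
  have hgt : 1 < Fintype.card { t : Fin 3 → F // MvPolynomial.eval t f = 0 } := by
    have hpos : 0 < Fintype.card { t : Fin 3 → F // MvPolynomial.eval t f = 0 } :=
      Fintype.card_pos_iff.2 ⟨⟨0, h0⟩⟩
    exact lt_of_lt_of_le (Fact.out : p.Prime).one_lt (Nat.le_of_dvd hpos hd)
  have := Fintype.one_lt_card_iff_nontrivial.1 hgt
  obtain ⟨⟨t, ht⟩, hne⟩ := exists_ne (⟨0, h0⟩ : { t : Fin 3 → F // MvPolynomial.eval t f = 0 })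
  refine ⟨t 0, t 1, t 2, ?_, by rw [← hev, ht]⟩
  intro hz
  apply hne
  have := (Fintype.linearIndependent_iff.1 h) t (by simpa [Fin.sum_univ_three] using hz)
  exact Subtype.ext (funext this)

lemma exists_ext [Fintype F] [FiniteDimensional F V] {Q : QuadraticForm F V} (hQ : Nondeg Q)
    {U : Submodule F V} (hU : TotallySingular Q U) (hd : 2 * finrank F U + 3 ≤ finrank F V) :
    ∃ x ∈ orth Q U, Q x = 0 ∧ x ∉ U := by
  have h1 := finrank_orth hQ hU
  obtain ⟨C, hC⟩ := Submodule.exists_isCompl (U.submoduleOf (orth Q U))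
  have h2 := Submodule.finrank_add_eq_of_isCompl hC
  have h3 : finrank F (U.submoduleOf (orth Q U)) = finrank F U :=
    (Submodule.submoduleOfEquivOfLe (ts_le_orth hU)).finrank_eq
  have h4 : 3 ≤ finrank F C := by omega
  obtain ⟨f, hf⟩ := exists_linearIndependent_of_le_finrank h4
  have hf' : LinearIndependent F ![((f 0 : C) : orth Q U), f 1, f 2] := by
    have := hf.map' C.subtype (by simp)
    have he : ![((f 0 : C) : orth Q U), f 1, f 2] = C.subtype ∘ f := by
      ext i; fin_cases i <;> rfl
    rw [he]
    exact this
  obtain ⟨a, b, c, hne, h0⟩ := cw3 (Q.comp (orth Q U).subtype) _ _ _ hf'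
  set w := a • ((f 0 : C) : orth Q U) + b • ((f 1 : C) : orth Q U) + c • ((f 2 : C) : orth Q U)
    with hw
  have hwC : w ∈ C := by
    refine add_mem (add_mem ?_ ?_) ?_ <;> exact C.smul_mem _ (Subtype.mem _)
  refine ⟨w, w.2, h0, fun hwU => hne ?_⟩
  exact (Submodule.disjoint_def.1 hC.disjoint) w hwU hwC

lemma ts_sup {Q : QuadraticForm F V} {U : Submodule F V} (hU : TotallySingular Q U)
    {x : V} (hx : x ∈ orth Q U) (hx0 : Q x = 0) :
    TotallySingular Q (U ⊔ Submodule.span F {x}) := by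
  intro y hy
  obtain ⟨u, hu, w, hw, rfl⟩ := Submodule.mem_sup.1 hy
  obtain ⟨c, rfl⟩ := Submodule.mem_span_singleton.1 hw
  rw [q_add, QuadraticMap.map_smul, hU u hu, hx0, polar_smul_right,
    (mem_orth Q U x).1 hx u hu]
  simp

lemma finrank_sup_one [FiniteDimensional F V] {U : Submodule F V} {x : V} (hx : x ∉ U) :
    finrank F ↥(U ⊔ Submodule.span F {x}) = finrank F U + 1 := by
  have hx0 : x ≠ 0 := fun h => hx (h ▸ U.zero_mem)
  have h := Submodule.finrank_sup_add_finrank_inf_eq U (Submodule.span F {x})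
  have hd : U ⊓ Submodule.span F {x} = ⊥ := by
    rw [← disjoint_iff, Submodule.disjoint_span_singleton' hx0]
    exact hx
  rw [hd, finrank_bot, finrank_span_singleton hx0] at h
  exact h

lemma mem_orth_sup {Q : QuadraticForm F V} {U : Submodule F V} {x y : V} :
    y ∈ orth Q (U ⊔ Submodule.span F {x}) ↔ y ∈ orth Q U ∧ polar Q x y = 0 := by
  simp only [mem_orth]
  constructor
  · intro h
    exact ⟨fun u hu => h u (Submodule.mem_sup_left hu),
      h x (Submodule.mem_sup_right (Submodule.mem_span_singleton_self x))⟩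
  · rintro ⟨h1, h2⟩ z hz
    obtain ⟨u, hu, w, hw, rfl⟩ := Submodule.mem_sup.1 hz
    obtain ⟨c, rfl⟩ := Submodule.mem_span_singleton.1 hw
    simp [polar_add_left, polar_smul_left, h1 u hu, h2]

def Z (Q : QuadraticForm F V) (U : Submodule F V) : ℕ := {y : V | y ∈ orth Q U ∧ Q y = 0}.ncard

lemma ncard_sub [Fintype F] [FiniteDimensional F V] (U : Submodule F V) :
    (U : Set V).ncard = Fintype.card F ^ finrank F U := by
  have : Finite V := Module.finite_of_finite F
  rw [← Nat.card_coe_set_eq, ← Nat.card_eq_fintype_card]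
  exact Module.natCard_eq_pow_finrank

lemma Z_step [Fintype F] [FiniteDimensional F V] {Q : QuadraticForm F V} 
    {U : Submodule F V} {x : V} (hx : x ∈ orth Q U) (hx0 : Q x = 0) :
    Fintype.card F * Z Q U + Fintype.card F ^ finrank F (orth Q (U ⊔ Submodule.span F {x})) =
    Fintype.card F * Z Q (U ⊔ Submodule.span F {x}) + Fintype.card F ^ finrank F (orth Q U) := by
  have : Finite V := Module.finite_of_finite F
  rw [← ncard_sub, ← ncard_sub]
  set S : Set V := {y | y ∈ orth Q U ∧ polar Q x y ≠ 0 ∧ Q y = 0} with hS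
  set T : Set V := {y | y ∈ orth Q U ∧ polar Q x y ≠ 0} with hT
  have hxx : polar Q x x = 0 := by simp [polar_self, hx0]
  have h1 : Z Q U = Z Q (U ⊔ Submodule.span F {x}) + S.ncard := by
    unfold Z
    rw [← Set.ncard_union_eq]
    · congr 1
      ext y
      simp only [Set.mem_ofPred_eq, Set.mem_union, mem_orth_sup, hS]
      tauto
    · rw [Set.disjoint_left]
      rintro y ⟨h, _⟩ ⟨_, h', _⟩
      exact h' (mem_orth_sup.1 h).2
  have h2 : (orth Q U : Set V).ncard =
      (orth Q (U ⊔ Submodule.span F {x}) : Set V).ncard + T.ncard := by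
    rw [← Set.ncard_union_eq]
    · congr 1
      ext y
      simp only [Set.mem_ofPred_eq, Set.mem_union, mem_orth_sup, hT, SetLike.mem_coe]
      tauto
    · rw [Set.disjoint_left]
      rintro y h ⟨_, h'⟩
      exact h' (mem_orth_sup.1 h).2
  have h3 : T.ncard = S.ncard * Fintype.card F := by
    have : T = (fun p : V × F => p.1 + p.2 • x) '' (S ×ˢ Set.univ) := by
      ext y
      constructor
      · rintro ⟨h, h'⟩
        refine ⟨(y + (-(Q y / polar Q x y)) • x, Q y / polar Q x y), ⟨⟨?_, ?_, ?_⟩, trivial⟩, ?_⟩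
        · exact add_mem h (Submodule.smul_mem _ _ hx)
        · simpa [polar_add_right, polar_smul_right, hxx] using h'
        · simp only [q_add, QuadraticMap.map_smul, polar_smul_right, hx0,
            polar_comm Q y x, smul_eq_mul]
          field_simp
          ring
        · simp [neg_smul]
      · rintro ⟨⟨z, t⟩, ⟨⟨h1, h2, h3⟩, -⟩, rfl⟩
        refine ⟨add_mem h1 (Submodule.smul_mem _ _ hx), ?_⟩
        simpa [polar_add_right, polar_smul_right, hxx] using h2
    rw [this, Set.InjOn.ncard_image, Set.ncard_prod, Set.ncard_univ, Nat.card_eq_fintype_card]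
    rintro ⟨z, t⟩ ⟨⟨h1, h2, h3⟩, -⟩ ⟨z', t'⟩ ⟨⟨h1', h2', h3'⟩, -⟩ h
    simp only at h h1 h2 h3 h1' h2' h3'
    have hz : z' = z + (t - t') • x := by
      rw [sub_smul, ← add_sub_assoc, h]; simp
    rw [hz, q_add, QuadraticMap.map_smul, polar_smul_right, hx0, h3,
      polar_comm Q z x] at h3'
    have ht : t - t' = 0 := by
      simpa [h2] using h3'
    have : t = t' := sub_eq_zero.1 ht
    subst this
    simp [hz]
  rw [h1, h2, h3]; ring

lemma Z_formula [Fintype F] [FiniteDimensional F V] {Q : QuadraticForm F V} (hQ : Nondeg Q)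
    (n : ℕ) (hn : ∀ W : Submodule F V, TotallySingular Q W → finrank F W ≤ n)
    (hd : 2 * n + 1 ≤ finrank F V) (j : ℕ) :
    ∀ U : Submodule F V, TotallySingular Q U → finrank F U + j = n →
      Z Q U + Fintype.card F ^ (finrank F V - 1 - n) =
        Fintype.card F ^ n + Fintype.card F ^ (finrank F V - 1 - finrank F U) := by
  induction j with
  | zero =>
    intro U hU hk
    have : Z Q U = (U : Set V).ncard := by
      unfold Z
      congr 1
      ext y
      refine ⟨fun ⟨h1, h2⟩ => ?_, fun h => ⟨ts_le_orth hU h, hU y h⟩⟩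
      by_contra hy
      have := hn _ (ts_sup hU h1 h2)
      rw [finrank_sup_one hy] at this
      omega
    rw [this, ncard_sub]
    simp only [add_zero] at hk
    rw [hk]
  | succ j ih =>
    intro U hU hk
    obtain ⟨x, hx, hx0, hxU⟩ := exists_ext hQ hU (by omega)
    have h1 := ts_sup hU hx hx0
    have h2 := finrank_sup_one hxU
    have h3 := ih _ h1 (by omega)
    have h4 := Z_step hx hx0
    have h5 := finrank_orth hQ hU
    have h6 := finrank_orth hQ h1
    rw [h2] at h3 h6
    set q := Fintype.card F
    have hq : 0 < q := Fintype.card_pos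
    obtain ⟨e, he⟩ : ∃ e, finrank F (orth Q U) = e + 2 := ⟨finrank F (orth Q U) - 2, by omega⟩
    rw [he, show finrank F (orth Q (U ⊔ Submodule.span F {x})) = e + 1 by omega] at h4
    rw [show finrank F V - 1 - (finrank F U + 1) = e by omega] at h3
    rw [show finrank F V - 1 - finrank F U = e + 1 by omega]
    apply Nat.eq_of_mul_eq_mul_left hq
    generalize Z Q (U ⊔ Submodule.span F {x}) = z at *
    have h3' := congrArg (q * ·) h3
    simp only [mul_add, pow_succ] at *
    nlinarith

def G (Q : QuadraticForm F V) (n : ℕ) (U : Submodule F V) : ℕ :=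
  {g : Submodule F V | IsGenerator Q n g ∧ U ≤ g}.ncard

lemma G_const [Fintype F] [FiniteDimensional F V] {Q : QuadraticForm F V} (hQ : Nondeg Q)
    (n : ℕ) (hn : ∀ W : Submodule F V, TotallySingular Q W → finrank F W ≤ n)
    (hd : 2 * n + 1 ≤ finrank F V) (j : ℕ) :
    ∀ k, k + j = n → ∃ c, 0 < c ∧ 
    ∀ U : Submodule F V, TotallySingular Q U → finrank F U = k → G Q n U = c := by
  have : Finite V := Module.finite_of_finite F
  induction j with
  | zero =>
    intro k hk
    refine ⟨1, one_pos, fun U hU hUk => ?_⟩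
    unfold G
    rw [Set.ncard_eq_one]
    refine ⟨U, ?_⟩
    ext g
    simp only [Set.mem_ofPred_eq, Set.mem_singleton_iff]
    constructor
    · rintro ⟨h1, h2⟩
      exact (Submodule.eq_of_le_of_finrank_eq h2 (by rw [h1.2]; omega)).symm
    · rintro rfl
      exact ⟨⟨hU, by omega⟩, le_rfl⟩
  | succ j ih =>
    intro k hk
    obtain ⟨c, hc, hcU⟩ := ih (k + 1) (by omega)
    set q := Fintype.card F
    have hq1 : 1 < q := Fintype.one_lt_card
    have hlt : q ^ k < q ^ n := Nat.pow_lt_pow_right hq1 (by omega)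
    have key : ∀ U : Submodule F V, TotallySingular Q U → finrank F U = k →
        0 < G Q n U ∧ G Q n U * (q ^ n - q ^ k) = 
          (q ^ n + q ^ (finrank F V - 1 - k) - q ^ (finrank F V - 1 - n) - q ^ k) * c := by
      intro U hU hUk
      constructor
      · obtain ⟨x, hx, hx0, hxU⟩ := exists_ext hQ hU (by omega)
        have h1 := hcU _ (ts_sup hU hx hx0) (by rw [finrank_sup_one hxU, hUk])
        rw [← h1] at hc
        refine hc.trans_le (Set.ncard_le_ncard ?_ (Set.toFinite _))
        rintro g ⟨h, h'⟩
        exact ⟨h, le_sup_left.trans h'⟩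
      · have hZ := Z_formula hQ n hn hd (j + 1) U hU (by omega)
        rw [hUk] at hZ
        have hA : {y : V | (y ∈ orth Q U ∧ Q y = 0) ∧ y ∉ U}.ncard = Z Q U - q ^ k := by
          rw [← hUk, ← ncard_sub]
          unfold Z
          have hsub : (U : Set V) ⊆ {y : V | y ∈ orth Q U ∧ Q y = 0} :=
            fun y h => ⟨ts_le_orth hU h, hU y h⟩
          rw [← Set.ncard_sdiff hsub]
          rfl
        have := dcount {g : Submodule F V | IsGenerator Q n g ∧ U ≤ g}
          {y : V | (y ∈ orth Q U ∧ Q y = 0) ∧ y ∉ U} (fun g y => y ∈ g) (q ^ n - q ^ k) c ?_ ?_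
        · rw [hA] at this
          rw [G, this, ← hZ, Nat.add_sub_cancel]
        · rintro g ⟨hg, hUg⟩
          rw [← hUk, ← hg.2, ← ncard_sub, ← ncard_sub, ← Set.ncard_sdiff hUg]
          congr 1
          ext y
          simp only [Set.mem_ofPred_eq, Set.mem_sdiff, SetLike.mem_coe]
          constructor
          · tauto
          · rintro ⟨h1, h2⟩
            refine ⟨⟨⟨fun u hu => ts_le_orth hg.1 h1 u (hUg hu), hg.1 y h1⟩, h2⟩, h1⟩
        · rintro y ⟨⟨h1, h2⟩, h3⟩
          rw [← hcU _ (ts_sup hU h1 h2) (by rw [finrank_sup_one h3, hUk]), G]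
          congr 1
          ext g
          simp [and_assoc]
    by_cases hex : ∃ U : Submodule F V, TotallySingular Q U ∧ finrank F U = k
    · obtain ⟨U, hU, hUk⟩ := hex
      refine ⟨G Q n U, (key U hU hUk).1, fun U' hU' hUk' => ?_⟩
      apply Nat.eq_of_mul_eq_mul_right (Nat.sub_pos_of_lt hlt)
      rw [(key U hU hUk).2, (key U' hU' hUk').2]
    · exact ⟨1, one_pos, fun U hU hUk => (hex ⟨U, hU, hUk⟩).elim⟩

lemma mem_orth_span {Q : QuadraticForm F V} {x y : V} :
    y ∈ orth Q (Submodule.span F {x}) ↔ polar Q x y = 0 := by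
  have := mem_orth_sup (Q := Q) (U := ⊥) (x := x) (y := y)
  rw [bot_sup_eq] at this
  rw [this, mem_orth]
  simp

lemma ts_span {Q : QuadraticForm F V} {x : V} (hx : Q x = 0) :
    TotallySingular Q (Submodule.span F {x}) := by
  intro y hy
  obtain ⟨c, rfl⟩ := Submodule.mem_span_singleton.1 hy
  simp [QuadraticMap.map_smul, hx]

/-- If `P = ⟨v⟩` is a singular point of the parabolic section `𝒬 = Q ∩ H`, then
`v^⊥` contains exactly `m(qⁿ − q)` points of the relative `m`-ovoid `R`. -/
theorem statement_7
    (q n : ℕ) [Fintype F] (hq : Fintype.card F = q) (hn : 2 ≤ n)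
    (hV : finrank F V = 2 * n + 2)
    (Q : QuadraticForm F V) (hQnd : Nondeg Q) (hQw : HasWittIndex Q n)
    (H : Submodule F V) (hH : finrank F H = 2 * n + 1) (hHnd : NondegOn Q H)
    (m : ℕ) (R : Set (Submodule F V)) (hR : IsRelativeMOvoid Q n H m R)
    (v : V) (hv0 : v ≠ 0) (hvQ : Q v = 0) (hvH : v ∈ H) :
    {P ∈ R | P ≤ vperp Q v}.ncard = m * (q ^ n - q) := by
  classical
  subst hq
  have : FiniteDimensional F V := FiniteDimensional.of_finrank_pos (by omega)
  have : Finite V := Module.finite_of_finite F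
  set q := Fintype.card F with hq
  have hq1 : 1 < q := Fintype.one_lt_card
  have hd : 2 * n + 1 ≤ finrank F V := by omega
  obtain ⟨c, hc, hcU⟩ := G_const hQnd n hQw.1 hd (n - 2) 2 (by omega)
  -- singular vectors in the perp of v
  have hZ := Z_formula hQnd n hQw.1 hd (n - 1) _ (ts_span hvQ)
    (by rw [finrank_span_singleton hv0]; omega)
  rw [finrank_span_singleton hv0] at hZ
  have hZH : Z (Q.comp H.subtype) (Submodule.span F {(⟨v, hvH⟩ : H)}) + q ^ n =
      q ^ n + q ^ (2 * n - 1) := by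
    have hv0' : (⟨v, hvH⟩ : H) ≠ 0 := fun h => hv0 (congrArg Subtype.val h)
    have := Z_formula (V := H) (Q := Q.comp H.subtype) ?_ n ?_ (by omega) (n - 1)
      (Submodule.span F {(⟨v, hvH⟩ : H)}) (ts_span hvQ)
      (by rw [finrank_span_singleton hv0']; omega)
    · rw [finrank_span_singleton hv0', hH] at this
      convert this using 3 <;> omega
    · intro x hx hxx
      apply Subtype.ext
      exact hHnd x x.2 hx fun w hw => hxx ⟨w, hw⟩
    · intro W hW
      have h1 : TotallySingular Q (W.map H.subtype) := by
        rintro _ ⟨y, hy, rfl⟩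
        exact hW y hy
      have h2 := hQw.1 _ h1
      rwa [Submodule.finrank_map_subtype_eq] at h2
  have hZH' : Z (Q.comp H.subtype) (Submodule.span F {(⟨v, hvH⟩ : H)}) =
      {y : V | (polar Q v y = 0 ∧ Q y = 0) ∧ y ∈ H}.ncard := by
    unfold Z
    rw [← Set.ncard_image_of_injective _ (Subtype.val_injective (p := (· ∈ H)))]
    congr 1
    ext y
    constructor
    · rintro ⟨y, ⟨h1, h2⟩, rfl⟩
      exact ⟨⟨(mem_orth_span (Q := Q.comp H.subtype)).1 h1, h2⟩, y.2⟩
    · rintro ⟨⟨h1, h2⟩, h3⟩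
      exact ⟨⟨y, h3⟩, ⟨(mem_orth_span (Q := Q.comp H.subtype)).2 h1, h2⟩, rfl⟩
  set A : Set V := {y : V | (polar Q v y = 0 ∧ Q y = 0) ∧ y ∉ H} with hA
  have hZA : Z Q (Submodule.span F {v}) =
      {y : V | (polar Q v y = 0 ∧ Q y = 0) ∧ y ∈ H}.ncard + A.ncard := by
    unfold Z
    rw [← Set.ncard_union_eq]
    · congr 1
      ext y
      simp only [Set.mem_ofPred_eq, Set.mem_union, mem_orth_span, hA]
      tauto
    · rw [Set.disjoint_left]
      rintro y ⟨_, h⟩ ⟨_, h'⟩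
      exact h' h
  -- the generators through v and a further point
  have hline : ∀ x : V, polar Q v x = 0 → Q x = 0 → x ∉ H →
      {g : Submodule F V | (IsGenerator Q n g ∧ v ∈ g ∧ ¬ g ≤ H) ∧ x ∈ g}.ncard = c := by
    intro x h1 h2 h3
    have hxv : x ∉ Submodule.span F {v} := fun h =>
      h3 ((Submodule.span_singleton_le_iff_mem v H).2 hvH h)
    rw [← hcU _ (ts_sup (ts_span hvQ) (mem_orth_span.2 h1) h2)
      (by rw [finrank_sup_one hxv, finrank_span_singleton hv0]), G]
    congr 1
    ext g
    simp only [Set.mem_ofPred_eq, sup_le_iff, Submodule.span_singleton_le_iff_mem]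
    constructor
    · tauto
    · rintro ⟨h, h', h''⟩
      exact ⟨⟨h, h', fun hg => h3 (hg h'')⟩, h''⟩
  have hpol : ∀ g : Submodule F V, IsGenerator Q n g → v ∈ g → ∀ x ∈ g, polar Q v x = 0 :=
    fun g hg hvg x hx => ts_le_orth hg.1 hx v hvg
  have d1 := dcount A {g : Submodule F V | IsGenerator Q n g ∧ v ∈ g ∧ ¬ g ≤ H}
    (fun x g => x ∈ g) c (q ^ n - q ^ (n - 1)) (fun x hx => hline x hx.1.1 hx.1.2 hx.2) (by
      rintro g ⟨hg, hvg, hgH⟩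
      have hf : finrank F ↥(g ⊓ H) = n - 1 := by
        have h1 := Submodule.finrank_sup_add_finrank_inf_eq g H
        have h2 : H < g ⊔ H := lt_of_le_of_ne le_sup_right fun h => hgH (h ▸ le_sup_left)
        have h3 := Submodule.finrank_lt_finrank_of_lt h2
        have h4 := Submodule.finrank_le (g ⊔ H)
        have h5 := hg.2
        omega
      rw [← hf, ← hg.2, hq, ← ncard_sub, ← ncard_sub]
      have hsub : ((g ⊓ H : Submodule F V) : Set V) ⊆ g := fun y h => h.1
      rw [← Set.ncard_sdiff hsub]
      congr 1
      ext y
      simp only [hA, Set.mem_ofPred_eq, Set.mem_sdiff, SetLike.mem_coe, Submodule.mem_inf]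
      constructor
      · tauto
      · rintro ⟨h1, h2⟩
        exact ⟨⟨⟨hpol g hg hvg y h1, hg.1 y h1⟩, fun h => h2 ⟨h1, h⟩⟩, h1⟩)
  have d2 := dcount {P ∈ R | P ≤ vperp Q v}
    {g : Submodule F V | IsGenerator Q n g ∧ v ∈ g ∧ ¬ g ≤ H}
    (fun P g => P ≤ g) c m (by
      rintro P ⟨hP, hPv⟩
      obtain ⟨⟨x, hx0, hxQ, rfl⟩, hPH⟩ := hR.1 P hP
      rw [Submodule.span_singleton_le_iff_mem] at hPH hPv
      simp only [Submodule.span_singleton_le_iff_mem]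
      exact hline x hPv hxQ hPH) (by
      rintro g ⟨hg, hvg, hgH⟩
      rw [← hR.2 g hg hgH]
      congr 1
      ext P
      constructor
      · rintro ⟨⟨h1, _⟩, h2⟩
        exact ⟨h1, h2⟩
      · rintro ⟨h1, h2⟩
        exact ⟨⟨h1, fun y hy => hpol g hg hvg y (h2 hy)⟩, h2⟩)
  generalize {P ∈ R | P ≤ vperp Q v}.ncard = r at *
  generalize {g : Submodule F V | IsGenerator Q n g ∧ v ∈ g ∧ ¬ g ≤ H}.ncard = N at *
  have hlt : q ^ (n - 1) < q ^ n := Nat.pow_lt_pow_right hq1 (by omega)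
  have hAc : A.ncard = (q ^ n - q) * (q ^ n - q ^ (n - 1)) := by
    rw [← hZH'] at hZA
    rw [← hq, hV, hZA] at hZ
    obtain ⟨k, rfl⟩ : ∃ k, n = k + 2 := ⟨n - 2, by omega⟩
    have e1 : 2 * (k + 2) + 2 - 1 - (k + 2) = k + 3 := by omega
    have e2 : 2 * (k + 2) + 2 - 1 - 1 = 2 * k + 4 := by omega
    have e3 : 2 * (k + 2) - 1 = 2 * k + 3 := by omega
    rw [e1, e2] at hZ
    rw [e3] at hZH
    have e4 : k + 2 - 1 = k + 1 := rfl
    rw [e4] at hlt ⊢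
    have h5 : q ≤ q ^ (k + 2) := Nat.le_self_pow (by omega) q
    zify [hlt.le, h5]
    zify at hZ hZH
    have hz : (Z (Q.comp H.subtype) (Submodule.span F {(⟨v, hvH⟩ : H)}) : ℤ)
      = (q : ℤ) ^ (2 * k + 3) := by linarith
    rw [hz] at hZ
    linear_combination hZ
  rw [hAc] at d1
  have hpos : 0 < q ^ n - q ^ (n - 1) := Nat.sub_pos_of_lt hlt
  generalize q ^ n - q ^ (n - 1) = D at *
  generalize q ^ n - q = E at *
  have d3 : E * c = N := Nat.eq_of_mul_eq_mul_right hpos (by rw [← d1]; ring)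
  apply Nat.eq_of_mul_eq_mul_right hc
  rw [d2, ← d3]; ring
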